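/- Let D be a K×K diagonal matrix and Ψ a K×K matrix such that both I - DΨᵀ and I - DΨ are invertible. Define p = c(I - DΨᵀ)^{-1} D 𝟙 and q = c(I - DΨ)^{-1} D 𝟙 for a scalar c, where 𝟙 is the all-ones vector. Then 𝟙ᵀ p = 𝟙ᵀ q; i.e., the total uplink power equals the total downlink power (uplink–downlink duality of total power). -/

import Mathlib

open Matrix

theorem uplink_downlink_total_power_duality {K : ℕ}
    (d : Fin K → ℝ) (Ψ : Matrix (Fin K) (Fin K) ℝ) (c : ℝ)
    (hU : IsUnit (1 - Matrix.diagonal d * Ψᵀ))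
    (hD : IsUnit (1 - Matrix.diagonal d * Ψ))
    (p q : Fin K → ℝ)
    (hp : p = c • (((1 - Matrix.diagonal d * Ψᵀ)⁻¹ * Matrix.diagonal d) *ᵥ fun _ => 1))
    (hq : q = c • (((1 - Matrix.diagonal d * Ψ)⁻¹ * Matrix.diagonal d) *ᵥ fun _ => 1)) :
    (fun _ => (1 : ℝ)) ⬝ᵥ p = (fun _ => (1 : ℝ)) ⬝ᵥ q := by 
  have hA := (Matrix.isUnit_iff_isUnit_det _).mp hU
  have hB := (Matrix.isUnit_iff_isUnit_det _).mp hD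
  have hBt : IsUnit (1 - Matrix.diagonal d * Ψ)ᵀ.det := by
    rwa [Matrix.det_transpose]
  have key : Matrix.diagonal d * (1 - Matrix.diagonal d * Ψ)ᵀ
      = (1 - Matrix.diagonal d * Ψᵀ) * Matrix.diagonal d := by
    simp [Matrix.transpose_sub, Matrix.transpose_mul, mul_sub, sub_mul, Matrix.mul_assoc]
  have h : (1 - Matrix.diagonal d * Ψᵀ)⁻¹ * Matrix.diagonal d
      = ((1 - Matrix.diagonal d * Ψ)⁻¹ * Matrix.diagonal d)ᵀ := by
    rw [Matrix.transpose_mul, Matrix.diagonal_transpose, Matrix.transpose_nonsing_inv]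
    calc (1 - Matrix.diagonal d * Ψᵀ)⁻¹ * Matrix.diagonal d
        = (1 - Matrix.diagonal d * Ψᵀ)⁻¹ * (Matrix.diagonal d *
            (1 - Matrix.diagonal d * Ψ)ᵀ) * ((1 - Matrix.diagonal d * Ψ)ᵀ)⁻¹ := by
          rw [← Matrix.mul_assoc, Matrix.mul_nonsing_inv_cancel_right _ _ hBt]
      _ = Matrix.diagonal d * ((1 - Matrix.diagonal d * Ψ)ᵀ)⁻¹ := by
          rw [key, Matrix.nonsing_inv_mul_cancel_left _ _ hA]
  rw [hp, hq, h, dotProduct_smul, dotProduct_smul, Matrix.mulVec_transpose,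
    dotProduct_comm, ← Matrix.dotProduct_mulVec]
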